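/- arXiv:1011.1785 — 2 statements merged into one kernel-verified Lean document; each statement's English description precedes it below -/
import Mathlib

section
/- Let f₁, …, f_J : (a,b) → ℝ (a < 0 < b) be continuously differentiable with f_j ≡ 0 for every even j, and assume x·f_j'(x) + (j−1)·f_j(x) ≥ 0 for every odd j and every x ∈ (a,b). Assume condition (Seq): there exists a sequence x_m → 0 such that for every m there exists 1 ≤ j(m) ≤ J with x_m·f_{j(m)}'(x_m) + (j(m)−1)·f_{j(m)}(x_m) ≠ 0. Then the system ẋ = y, ẏ = −x − Σ_{j=1}^{J} f_j(x)·y^j has at most one limit cycle contained in (a,b) × ℝ, and if such a limit cycle exists it is hyperbolic. -/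
open Set Filter Metric Real Topology intervalIntegral

noncomputable section

/-- `γ` solves the planar ODE with vector field `F` at every time in `s`. -/
def IsSolOn (F : ℝ × ℝ → ℝ × ℝ) (γ : ℝ → ℝ × ℝ) (s : Set ℝ) : Prop :=
  ∀ t ∈ s, HasDerivAt γ (F (γ t)) t

/-- A cycle: a non-constant `T`-periodic solution (with `T > 0`). -/
def IsCycle (F : ℝ × ℝ → ℝ × ℝ) (γ : ℝ → ℝ × ℝ) (T : ℝ) : Prop :=
  (∀ t, HasDerivAt γ (F (γ t)) t) ∧ 0 < T ∧ (∀ t, γ (t + T) = γ t) ∧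
    ∃ t₁ t₂, γ t₁ ≠ γ t₂

/-- A limit cycle: a cycle whose orbit has a neighbourhood containing no orbit
of any other cycle. -/
def IsLimitCycle (F : ℝ × ℝ → ℝ × ℝ) (γ : ℝ → ℝ × ℝ) (T : ℝ) : Prop :=
  IsCycle F γ T ∧
    ∃ U : Set (ℝ × ℝ), IsOpen U ∧ range γ ⊆ U ∧
      ∀ (γ' : ℝ → ℝ × ℝ) (T' : ℝ), IsCycle F γ' T' →
        range γ' ≠ range γ → ¬ range γ' ⊆ U

/-- There is a non-trivial positive semi-orbit of the system contained in `Z`. -/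
def HasSemiOrbitIn (F : ℝ × ℝ → ℝ × ℝ) (Z : Set (ℝ × ℝ)) : Prop :=
  ∃ (γ : ℝ → ℝ × ℝ) (t₀ : ℝ), IsSolOn F γ (Ici t₀) ∧
    (∃ t₁ ∈ Ici t₀, ∃ t₂ ∈ Ici t₀, γ t₁ ≠ γ t₂) ∧ γ '' Ici t₀ ⊆ Z

/-- There is a non-trivial (full) orbit of the system contained in `Z`. -/
def HasOrbitIn (F : ℝ × ℝ → ℝ × ℝ) (Z : Set (ℝ × ℝ)) : Prop :=
  ∃ γ : ℝ → ℝ × ℝ, (∀ t, HasDerivAt γ (F (γ t)) t) ∧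
    (∃ t₁ t₂, γ t₁ ≠ γ t₂) ∧ range γ ⊆ Z

/-- The vector field of system (S): ẋ = y, ẏ = −x − y·φ(x,y). -/
def phiVF (φ : ℝ × ℝ → ℝ) : ℝ × ℝ → ℝ × ℝ :=
  fun p => (p.2, -p.1 - p.2 * φ p)

/-- The vector field of the system ẋ = y, ẏ = −x − Σ_{j=1}^{J} f_j(x) yʲ. -/
def polyVF (J : ℕ) (f : ℕ → ℝ → ℝ) : ℝ × ℝ → ℝ × ℝ :=
  fun p => (p.2, -p.1 - ∑ j ∈ Finset.Icc 1 J, f j p.1 * p.2 ^ j)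

/-- The divergence of `polyVF J f`. -/
def polyDiv (J : ℕ) (f : ℕ → ℝ → ℝ) : ℝ × ℝ → ℝ :=
  fun p => -∑ j ∈ Finset.Icc 1 J, (j : ℝ) * f j p.1 * p.2 ^ (j - 1)

/-!
Write the system as `ẋ = y, ẏ = -x - y φ(x, y)` with `φ = Σ f_j(x) y^(j-1)`. The hypotheses say that
`ν = x φ_x + y φ_y` is nonnegative, i.e. `φ` is nondecreasing along rays from the origin.

Along a solution, `A = y ẋ - x ẏ` satisfies `Ȧ = (div) A + y² ν`. On a cycle `A` is positive where
`y = 0`, and by this equation and periodicity it is then positive everywhere. Integrating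
`Ȧ / A = div + y² ν / A` over a period gives `∫ div = -∫ y² ν / A`, which is negative because every
cycle crosses the `y`-axis, near which `ν` does not vanish identically.

Since `A > 0`, a cycle can be parametrised by its clockwise polar angle, as `r = exp (u θ)` with
`u' = -sin² θ φ / (1 - cos θ sin θ φ)`. The right-hand side is nonincreasing in `φ`, so for two
cycles `(u₂ - u₁)²` is nonincreasing; being periodic it is constant. If the constant is nonzero then
`φ` is constant on each ray segment between the two cycles, hence `ν = 0` along both of them, away
from `y = 0`; this is excluded as above.
-/

section Calculus

theorem eq_of_antitone_of_periodic {h : ℝ → ℝ} {T : ℝ} (hT : 0 < T) (hanti : Antitone h)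
    (hper : Function.Periodic h T) (s t : ℝ) : h s = h t := by
  wlog hst : s ≤ t generalizing s t
  · exact (this t s (le_of_not_ge hst)).symm
  obtain ⟨t', ht', hs⟩ := hper.exists_mem_Ico hT s t
  exact le_antisymm (hs.trans_le (hanti ht'.1)) (hanti hst)

theorem pos_of_periodic_of_mul_le_deriv {h h' c : ℝ → ℝ} {T t₀ : ℝ} (hT : 0 < T)
    (hper : Function.Periodic h T) (hh : ∀ t, HasDerivAt h (h' t) t) (hc : Continuous c)
    (hle : ∀ t, c t * h t ≤ h' t) (ht₀ : 0 < h t₀) (t : ℝ) : 0 < h t := by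
  set C : ℝ → ℝ := fun t => ∫ s in (0 : ℝ)..t, c s
  have hC : ∀ t, HasDerivAt C (c t) t := fun t => (hc.integral_hasStrictDerivAt 0 t).hasDerivAt
  have hmono : Monotone fun t => h t * exp (-C t) := by
    refine monotone_of_hasDerivAt_nonneg (fun t => (hh t).mul (hC t).neg.exp) fun t => ?_
    have := mul_nonneg (sub_nonneg.2 (hle t)) (exp_pos (-C t)).le
    simp only [Pi.zero_apply, Pi.neg_apply]
    linarith
  obtain ⟨t', ht', heq⟩ := hper.exists_mem_Ico hT t t₀
  rw [heq]
  exact pos_of_mul_pos_left ((mul_pos ht₀ (exp_pos _)).trans_le (hmono ht'.1)) (exp_pos _).le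

theorem integral_neg_of_hasDerivAt_mul_add {h c r : ℝ → ℝ} {s t : ℝ} (hst : s < t)
    (hpos : ∀ x, 0 < h x) (hends : h s = h t) (hh : ∀ x, HasDerivAt h (c x * h x + r x) x)
    (hc : Continuous c) (hr : Continuous r) (hr_nonneg : ∀ x, 0 ≤ r x)
    (hr_pos : ∃ x ∈ Icc s t, 0 < r x) :
    ∫ x in s..t, c x < 0 := by
  have hhcont : Continuous h := continuous_iff_continuousAt.2 fun x => (hh x).continuousAt
  have hquot : Continuous fun x => r x / h x := hr.div hhcont fun x => (hpos x).ne'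
  have hlog : ∀ x, HasDerivAt (fun x => Real.log (h x)) (c x + r x / h x) x := fun x =>
    ((hh x).log (hpos x).ne').congr_deriv (by field_simp [(hpos x).ne'])
  have hzero : ∫ x in s..t, (c x + r x / h x) = 0 := by
    rw [integral_eq_sub_of_hasDerivAt (fun x _ => hlog x)
      ((hc.add hquot).intervalIntegrable _ _), hends, sub_self]
  have hquot_pos : 0 < ∫ x in s..t, r x / h x := by
    obtain ⟨x, hx, hrx⟩ := hr_pos
    exact integral_pos hst hquot.continuousOn (fun y _ => div_nonneg (hr_nonneg y) (hpos y).le)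
      ⟨x, hx, div_pos hrx (hpos x)⟩
  rw [integral_add (hc.intervalIntegrable _ _) (hquot.intervalIntegrable _ _)] at hzero
  linarith

theorem surjective_of_continuous_of_map_add {h : ℝ → ℝ} {T c : ℝ} (hcont : Continuous h)
    (hc : 0 < c) (hadd : ∀ t, h (t + T) = h t + c) : Function.Surjective h := by
  intro s
  let H : AddConstMap ℝ ℝ T c := ⟨h, hadd⟩
  obtain ⟨m, hm⟩ := Archimedean.arch (h 0 - s) hc
  obtain ⟨n, hn⟩ := Archimedean.arch (s - h 0) hc
  have hlow : h (0 - m • T) = h 0 - m • c := AddConstMapClass.map_sub_nsmul H 0 m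
  have hhigh : h (0 + n • T) = h 0 + n • c := AddConstMapClass.map_add_nsmul H 0 n
  exact mem_range_of_exists_le_of_exists_ge hcont
    ⟨0 - m • T, by linarith⟩ ⟨0 + n • T, by linarith⟩

theorem exists_orderIso_of_hasDerivAt_pos {h h' : ℝ → ℝ} {T c : ℝ} (hh : ∀ t, HasDerivAt h (h' t) t)
    (hpos : ∀ t, 0 < h' t) (hc : 0 < c) (hadd : ∀ t, h (t + T) = h t + c) :
    ∃ e : ℝ ≃o ℝ, (∀ t, e t = h t) ∧ (∀ s, e.symm (s + c) = e.symm s + T) ∧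
      ∀ s, HasDerivAt e.symm (h' (e.symm s))⁻¹ s := by
  have hcont : Continuous h := continuous_iff_continuousAt.2 fun t => (hh t).continuousAt
  let e := (strictMono_of_hasDerivAt_pos hh hpos).orderIsoOfSurjective h
    (surjective_of_continuous_of_map_add hcont hc hadd)
  have he : ∀ s, h (e.symm s) = s := e.apply_symm_apply
  refine ⟨e, fun t => rfl, fun s => ?_, fun s => ?_⟩
  · rw [e.symm_apply_eq]
    exact ((hadd _).trans (by rw [he])).symm
  · exact HasDerivAt.of_local_left_inverse e.symm.continuous.continuousAt (hh _) (hpos _).ne'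
      (.of_forall he)

theorem deriv_eq_zero_of_monotoneOn_uIcc {h : ℝ → ℝ} {s t d : ℝ} (hst : s ≠ t)
    (hmono : MonotoneOn h (uIcc s t)) (heq : h s = h t) (hd : HasDerivAt h d s) : d = 0 := by
  have hconst : ∀ x ∈ uIcc s t, h x = h s := by
    intro x hx
    rcases mem_uIcc.1 hx with ⟨hsx, hxt⟩ | ⟨htx, hxs⟩
    · exact le_antisymm ((hmono hx right_mem_uIcc hxt).trans_eq heq.symm)
        (hmono left_mem_uIcc hx hsx)
    · exact le_antisymm (hmono hx left_mem_uIcc hxs)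
        (heq.trans_le (hmono right_mem_uIcc hx htx))
  exact (uniqueDiffOn_uIcc hst s left_mem_uIcc).eq_deriv _ hd.hasDerivWithinAt
    ((hasDerivWithinAt_const s _ (h s)).congr hconst rfl)

theorem exists_hasDerivAt_exp_eq {z z' : ℝ → ℂ} (hz : ∀ t, HasDerivAt z (z' t) t)
    (hz' : Continuous z') (hne : ∀ t, z t ≠ 0) :
    ∃ w : ℝ → ℂ, (∀ t, HasDerivAt w (z' t / z t) t) ∧ ∀ t, Complex.exp (w t) = z t := by
  have hzcont : Continuous z := continuous_iff_continuousAt.2 fun t => (hz t).continuousAt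
  set w : ℝ → ℂ := fun t => Complex.log (z 0) + ∫ s in (0 : ℝ)..t, z' s / z s with hw
  have hw' : ∀ t, HasDerivAt w (z' t / z t) t := fun t =>
    ((hz'.div hzcont hne).integral_hasStrictDerivAt 0 t).hasDerivAt.const_add _
  refine ⟨w, hw', fun t => ?_⟩
  have hquot : ∀ t, HasDerivAt (fun t => Complex.exp (w t) / z t) 0 t := fun t =>
    ((hw' t).cexp.div (hz t) (hne t)).congr_deriv (by have := hne t; field_simp; ring)
  have hconst := is_const_of_deriv_eq_zero (fun t => (hquot t).differentiableAt)
    (fun t => (hquot t).deriv) t 0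
  have hone : Complex.exp (w 0) / z 0 = 1 := by
    simp only [hw, integral_same, add_zero, Complex.exp_log (hne 0), div_self (hne 0)]
  rwa [hone, div_eq_one_iff_eq (hne t)] at hconst

theorem exists_int_forall_map_add_eq {w w' : ℝ → ℂ} {T : ℝ} (hw : ∀ t, HasDerivAt w (w' t) t)
    (hw' : Function.Periodic w' T) (hexp : Complex.exp (w T) = Complex.exp (w 0)) :
    ∃ n : ℤ, ∀ t, w (t + T) = w t + n * (2 * π * Complex.I) := by
  obtain ⟨n, hn⟩ := Complex.exp_eq_exp_iff_exists_int.1 hexp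
  refine ⟨n, fun t => ?_⟩
  have hsub : ∀ t, HasDerivAt (fun t => w (t + T) - w t) 0 t := fun t =>
    (((hw (t + T)).comp_add_const t T).sub (hw t)).congr_deriv (by rw [hw' t, sub_self])
  have hconst := is_const_of_deriv_eq_zero (fun t => (hsub t).differentiableAt)
    (fun t => (hsub t).deriv) t 0
  rw [zero_add, hn, add_sub_cancel_left] at hconst
  rw [← hconst, add_sub_cancel]

theorem differentiableAt_of_contDiffOn {E : Type*} [NormedAddCommGroup E] [NormedSpace ℝ E]
    {h : E → ℝ} {U : Set E} (hU : IsOpen U) (hh : ContDiffOn ℝ 1 h U) {x : E} (hx : x ∈ U) :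
    DifferentiableAt ℝ h x :=
  (hh.contDiffAt (hU.mem_nhds hx)).differentiableAt one_ne_zero

end Calculus

section Definitions

/-- The Euler derivative `x φ_x + y φ_y`: the derivative of `φ` with respect to the logarithm of the
radius. -/
def radialDeriv (φ : ℝ × ℝ → ℝ) (p : ℝ × ℝ) : ℝ :=
  fderiv ℝ φ p p

/-- The divergence `-(φ + y φ_y)` of `phiVF φ`. -/
def phiDiv (φ : ℝ × ℝ → ℝ) (p : ℝ × ℝ) : ℝ :=
  -(φ p + p.2 * fderiv ℝ φ p (0, 1))

/-- The clockwise angular momentum `y ẋ - x ẏ` of `phiVF φ`. -/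
def angularMomentum (φ : ℝ × ℝ → ℝ) (p : ℝ × ℝ) : ℝ :=
  p.1 ^ 2 + p.2 ^ 2 + p.1 * p.2 * φ p

/-- The point with radius `exp ρ` and *clockwise* polar angle `θ`. The logarithmic radius turns
dilations into translations, and the clockwise angle increases along cycles. -/
def polarPoint (ρ θ : ℝ) : ℝ × ℝ :=
  exp ρ • (cos θ, -sin θ)

/-- The clockwise angular speed `θ̇` of `phiVF φ` at `polarPoint ρ θ`. -/
def angularSpeed (φ : ℝ × ℝ → ℝ) (ρ θ : ℝ) : ℝ :=
  1 - cos θ * sin θ * φ (polarPoint ρ θ)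

/-- The curve `θ ↦ polarPoint (u θ) θ` is a closed orbit of `phiVF φ` winding `N` times clockwise
around the origin: `u` solves `du/dθ = ρ̇ / θ̇`, and `θ̇ > 0` on the curve. -/
structure IsPolarProfile (φ : ℝ × ℝ → ℝ) (u : ℝ → ℝ) (N : ℕ) : Prop where
  winding_pos : 0 < N
  periodic : Function.Periodic u (N * (2 * π))
  angularSpeed_pos : ∀ θ, 0 < angularSpeed φ (u θ) θ
  hasDerivAt : ∀ θ,
    HasDerivAt u (-(sin θ ^ 2 * φ (polarPoint (u θ) θ)) / angularSpeed φ (u θ) θ) θ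

end Definitions

section Regularity

variable {φ : ℝ × ℝ → ℝ} {Ω : Set (ℝ × ℝ)}

theorem continuousOn_radialDeriv (hΩ : IsOpen Ω) (hφ : ContDiffOn ℝ 1 φ Ω) :
    ContinuousOn (radialDeriv φ) Ω :=
  (hφ.continuousOn_fderiv_of_isOpen hΩ le_rfl).clm_apply continuousOn_id

theorem continuousOn_phiDiv (hΩ : IsOpen Ω) (hφ : ContDiffOn ℝ 1 φ Ω) :
    ContinuousOn (phiDiv φ) Ω :=
  (hφ.continuousOn.add (continuousOn_snd.mul
    ((hφ.continuousOn_fderiv_of_isOpen hΩ le_rfl).clm_apply continuousOn_const))).neg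

end Regularity

section Polar

variable {φ : ℝ × ℝ → ℝ} {Ω : Set (ℝ × ℝ)}

theorem angularMomentum_polarPoint (φ : ℝ × ℝ → ℝ) (ρ θ : ℝ) :
    angularMomentum φ (polarPoint ρ θ) = exp ρ ^ 2 * angularSpeed φ ρ θ := by
  simp only [angularMomentum, angularSpeed]
  simp only [polarPoint, Prod.smul_mk, smul_eq_mul]
  linear_combination exp ρ ^ 2 * cos_sq_add_sin_sq θ

theorem eq_polarPoint_of_exp_eq {w : ℂ} {p : ℝ × ℝ}
    (h : Complex.exp w = Complex.equivRealProdCLM.symm p) : p = polarPoint w.re (-w.im) := by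
  have hre := congrArg Complex.re h
  have him := congrArg Complex.im h
  rw [Complex.exp_re, Complex.equivRealProdCLM_symm_apply_re] at hre
  rw [Complex.exp_im, Complex.equivRealProdCLM_symm_apply_im] at him
  simp [polarPoint, hre, him]

theorem phiVF_div_polarPoint (φ : ℝ × ℝ → ℝ) (ρ θ : ℝ) :
    Complex.equivRealProdCLM.symm (phiVF φ (polarPoint ρ θ)) /
        Complex.equivRealProdCLM.symm (polarPoint ρ θ) =
      ⟨-(sin θ ^ 2 * φ (polarPoint ρ θ)), -angularSpeed φ ρ θ⟩ := by
  have hne : Complex.equivRealProdCLM.symm (polarPoint ρ θ) ≠ 0 := by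
    have hcs : cos θ = 0 → sin θ ≠ 0 := fun hc hs => by
      simpa [hc, hs] using cos_sq_add_sin_sq θ
    simpa [polarPoint] using hcs
  rw [div_eq_iff hne, phiVF, angularSpeed]
  generalize φ (polarPoint ρ θ) = g
  apply Complex.ext
  · simp only [polarPoint, Prod.smul_mk, smul_eq_mul, Complex.mul_re,
      Complex.equivRealProdCLM_symm_apply_re, Complex.equivRealProdCLM_symm_apply_im]
    ring
  · simp only [polarPoint, Prod.smul_mk, smul_eq_mul, Complex.mul_im,
      Complex.equivRealProdCLM_symm_apply_re, Complex.equivRealProdCLM_symm_apply_im]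
    linear_combination -(exp ρ * g * sin θ) * cos_sq_add_sin_sq θ

theorem hasDerivAt_comp_polarPoint {ρ θ : ℝ} (hφ : DifferentiableAt ℝ φ (polarPoint ρ θ)) :
    HasDerivAt (fun s => φ (polarPoint s θ)) (radialDeriv φ (polarPoint ρ θ)) ρ :=
  hφ.hasFDerivAt.comp_hasDerivAt ρ ((Real.hasDerivAt_exp ρ).smul_const (cos θ, -sin θ))

theorem isLowerSet_setOf_polarPoint_mem (hstar : StarConvex ℝ 0 Ω) (θ : ℝ) :
    IsLowerSet {ρ | polarPoint ρ θ ∈ Ω} := by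
  intro ρ σ hσρ hρ
  have hscale : polarPoint σ θ = exp (σ - ρ) • polarPoint ρ θ := by
    simp only [polarPoint, smul_smul, ← exp_add, sub_add_cancel]
  rw [mem_ofPred_eq, hscale]
  exact hstar.smul_mem hρ (exp_pos _).le (exp_le_one_iff.2 (sub_nonpos.2 hσρ))

theorem monotoneOn_comp_polarPoint (hφ : ∀ p ∈ Ω, DifferentiableAt ℝ φ p)
    (hstar : StarConvex ℝ 0 Ω) (hν : ∀ p ∈ Ω, 0 ≤ radialDeriv φ p) (θ : ℝ) :
    MonotoneOn (fun ρ => φ (polarPoint ρ θ)) {ρ | polarPoint ρ θ ∈ Ω} := by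
  have hmem : ∀ ρ ∈ interior {ρ | polarPoint ρ θ ∈ Ω}, polarPoint ρ θ ∈ Ω :=
    fun ρ hρ => interior_subset (s := {ρ | polarPoint ρ θ ∈ Ω}) hρ
  exact monotoneOn_of_hasDerivWithinAt_nonneg
    (isLowerSet_setOf_polarPoint_mem hstar θ).ordConnected.convex
    (fun ρ hρ => (hasDerivAt_comp_polarPoint (hφ _ hρ)).continuousAt.continuousWithinAt)
    (fun ρ hρ => (hasDerivAt_comp_polarPoint (hφ _ (hmem ρ hρ))).hasDerivWithinAt)
    fun ρ hρ => hν _ (hmem ρ hρ)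

end Polar

section Cycle

variable {φ : ℝ × ℝ → ℝ} {Ω : Set (ℝ × ℝ)} {γ : ℝ → ℝ × ℝ} {T : ℝ}

namespace IsCycle

theorem periodic {F : ℝ × ℝ → ℝ × ℝ} (hγ : IsCycle F γ T) : Function.Periodic γ T :=
  hγ.2.2.1

theorem continuous {F : ℝ × ℝ → ℝ × ℝ} (hγ : IsCycle F γ T) : Continuous γ :=
  continuous_iff_continuousAt.2 fun t => (hγ.1 t).continuousAt

theorem exists_ne {F : ℝ × ℝ → ℝ × ℝ} (hγ : IsCycle F γ T) (p : ℝ × ℝ) : ∃ t, γ t ≠ p := by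
  obtain ⟨t₁, t₂, hne⟩ := hγ.2.2.2
  by_contra! hall
  exact hne ((hall t₁).trans (hall t₂).symm)

theorem hasDerivAt_fst (hγ : IsCycle (phiVF φ) γ T) (t : ℝ) :
    HasDerivAt (fun t => (γ t).1) (γ t).2 t :=
  (hγ.1 t).fst

theorem hasDerivAt_snd (hγ : IsCycle (phiVF φ) γ T) (t : ℝ) :
    HasDerivAt (fun t => (γ t).2) (-(γ t).1 - (γ t).2 * φ (γ t)) t :=
  (hγ.1 t).snd

theorem exists_snd_eq_zero (hγ : IsCycle (phiVF φ) γ T) : ∃ t, (γ t).2 = 0 := by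
  have hends : (γ 0).1 = (γ T).1 := by rw [hγ.periodic.eq]
  obtain ⟨t, -, ht⟩ := exists_hasDerivAt_eq_zero hγ.2.1 hγ.continuous.fst.continuousOn hends
    fun t _ => hγ.hasDerivAt_fst t
  exact ⟨t, ht⟩

/- A cycle cannot pass through the equilibrium `0`, because `|d(r²)/dt| = 2 y² |φ| ≤ 2 |φ| r²`. -/
theorem sq_add_sq_pos (hγ : IsCycle (phiVF φ) γ T) (hφ : Continuous fun t => φ (γ t)) (t : ℝ) :
    0 < (γ t).1 ^ 2 + (γ t).2 ^ 2 := by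
  obtain ⟨t₀, ht₀⟩ := hγ.exists_ne 0
  have hpos : 0 < (γ t₀).1 ^ 2 + (γ t₀).2 ^ 2 := by
    by_contra! hle
    exact ht₀ (Prod.ext (by rw [Prod.fst_zero]; nlinarith) (by rw [Prod.snd_zero]; nlinarith))
  refine pos_of_periodic_of_mul_le_deriv (h := fun t => (γ t).1 ^ 2 + (γ t).2 ^ 2)
    (c := fun t => -(2 * |φ (γ t)|)) hγ.2.1 (fun t => by simp only [hγ.periodic t])
    (fun t => ((hγ.hasDerivAt_fst t).pow 2).add ((hγ.hasDerivAt_snd t).pow 2))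
    (hφ.abs.const_mul 2).neg (fun t => ?_) hpos t
  have hx : 0 ≤ (γ t).1 ^ 2 * |φ (γ t)| := by positivity
  have hy := mul_le_mul_of_nonneg_left (le_abs_self (φ (γ t))) (sq_nonneg (γ t).2)
  simp only [Nat.cast_ofNat, Nat.add_one_sub_one, pow_one]
  linarith

theorem hasDerivAt_angularMomentum (hγ : IsCycle (phiVF φ) γ T) {t : ℝ}
    (hφ : DifferentiableAt ℝ φ (γ t)) :
    HasDerivAt (fun t => angularMomentum φ (γ t))
      (phiDiv φ (γ t) * angularMomentum φ (γ t) + (γ t).2 ^ 2 * radialDeriv φ (γ t)) t := by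
  have hx := hγ.hasDerivAt_fst t
  have hy := hγ.hasDerivAt_snd t
  have hfderiv : ∀ v : ℝ × ℝ,
      fderiv ℝ φ (γ t) v = v.1 * fderiv ℝ φ (γ t) (1, 0) + v.2 * fderiv ℝ φ (γ t) (0, 1) := by
    intro v
    rw [← smul_eq_mul, ← smul_eq_mul, ← map_smul, ← map_smul, ← map_add]
    simp
  have hφ' := hφ.hasFDerivAt.comp_hasDerivAt t (hγ.1 t)
  refine (((hx.pow 2).add (hy.pow 2)).add ((hx.mul hy).mul hφ')).congr_deriv ?_
  simp only [phiDiv, angularMomentum, radialDeriv, Pi.mul_apply, Function.comp_apply]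
  rw [hfderiv (phiVF φ (γ t)), hfderiv (γ t)]
  simp only [phiVF]
  simp only [Nat.cast_ofNat, Nat.add_one_sub_one, pow_one]
  ring

theorem continuous_comp {F : ℝ × ℝ → ℝ × ℝ} (hγ : IsCycle F γ T) (hφ : ContinuousOn φ Ω)
    (hγΩ : range γ ⊆ Ω) : Continuous fun t => φ (γ t) :=
  hφ.comp_continuous hγ.continuous fun t => hγΩ (mem_range_self t)

theorem angularMomentum_pos (hγ : IsCycle (phiVF φ) γ T) (hΩ : IsOpen Ω)
    (hφ : ContDiffOn ℝ 1 φ Ω) (hν : ∀ p ∈ Ω, 0 ≤ radialDeriv φ p) (hγΩ : range γ ⊆ Ω) (t : ℝ) :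
    0 < angularMomentum φ (γ t) := by
  obtain ⟨t₀, ht₀⟩ := hγ.exists_snd_eq_zero
  have hpos : 0 < angularMomentum φ (γ t₀) := by
    have := hγ.sq_add_sq_pos (hγ.continuous_comp hφ.continuousOn hγΩ) t₀
    simp only [angularMomentum, ht₀] at this ⊢
    linarith
  refine pos_of_periodic_of_mul_le_deriv (h := fun t => angularMomentum φ (γ t)) hγ.2.1
    (fun t => by simp only [hγ.periodic t])
    (fun t => hγ.hasDerivAt_angularMomentum
      (differentiableAt_of_contDiffOn hΩ hφ (hγΩ (mem_range_self t))))
    (hγ.continuous_comp (continuousOn_phiDiv hΩ hφ) hγΩ) (fun t => ?_) hpos t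
  exact le_add_of_nonneg_right (mul_nonneg (sq_nonneg _) (hν _ (hγΩ (mem_range_self t))))

theorem integral_phiDiv_neg (hγ : IsCycle (phiVF φ) γ T) (hΩ : IsOpen Ω)
    (hφ : ContDiffOn ℝ 1 φ Ω) (hν : ∀ p ∈ Ω, 0 ≤ radialDeriv φ p) (hγΩ : range γ ⊆ Ω)
    (hstrict : ∃ p ∈ range γ, p.2 ≠ 0 ∧ 0 < radialDeriv φ p) :
    ∫ t in (0 : ℝ)..T, phiDiv φ (γ t) < 0 := by
  have hmem : ∀ t, γ t ∈ Ω := fun t => hγΩ (mem_range_self t)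
  obtain ⟨_, ⟨t₀, rfl⟩, hy, hpos⟩ := hstrict
  obtain ⟨t, ht, heq⟩ := hγ.periodic.exists_mem_Ico₀ hγ.2.1 t₀
  rw [heq] at hy hpos
  exact integral_neg_of_hasDerivAt_mul_add hγ.2.1 (hγ.angularMomentum_pos hΩ hφ hν hγΩ)
    (by rw [hγ.periodic.eq])
    (fun t => hγ.hasDerivAt_angularMomentum (differentiableAt_of_contDiffOn hΩ hφ (hmem t)))
    (hγ.continuous_comp (continuousOn_phiDiv hΩ hφ) hγΩ)
    ((hγ.continuous.snd.pow 2).mul (hγ.continuous_comp (continuousOn_radialDeriv hΩ hφ) hγΩ))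
    (fun t => mul_nonneg (sq_nonneg _) (hν _ (hmem t)))
    ⟨t, Ico_subset_Icc_self ht, mul_pos (by positivity) hpos⟩

theorem exists_polar_lift (hγ : IsCycle (phiVF φ) γ T) (hφ : Continuous fun t => φ (γ t)) :
    ∃ (ρ ψ : ℝ → ℝ) (n : ℤ), (∀ t, γ t = polarPoint (ρ t) (ψ t)) ∧
      (∀ t, HasDerivAt ρ (-(sin (ψ t) ^ 2 * φ (γ t))) t) ∧
      (∀ t, HasDerivAt ψ (angularSpeed φ (ρ t) (ψ t)) t) ∧
      Function.Periodic ρ T ∧ ∀ t, ψ (t + T) = ψ t + n * (2 * π) := by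
  set e := Complex.equivRealProdCLM.symm
  have hz : ∀ t, HasDerivAt (fun t => e (γ t)) (e (phiVF φ (γ t))) t := fun t =>
    e.hasFDerivAt.comp_hasDerivAt t (hγ.1 t)
  have hz' : Continuous fun t => e (phiVF φ (γ t)) := by
    have hcont := hγ.continuous
    exact e.continuous.comp (hcont.snd.prodMk (hcont.fst.neg.sub (hcont.snd.mul hφ)))
  have hz_ne : ∀ t, e (γ t) ≠ 0 := by
    intro t h
    have hpos := hγ.sq_add_sq_pos hφ t
    simp [e.map_eq_zero_iff.1 h] at hpos
  obtain ⟨w, hw, hexp⟩ := exists_hasDerivAt_exp_eq hz hz' hz_ne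
  obtain ⟨n, hn⟩ : ∃ n : ℤ, ∀ t, w (t + T) = w t + n * (2 * π * Complex.I) :=
    exists_int_forall_map_add_eq hw (fun t => by simp only [hγ.periodic t])
      (by rw [hexp, hexp, hγ.periodic.eq])
  have hpolar : ∀ t, γ t = polarPoint (w t).re (-(w t).im) := fun t =>
    eq_polarPoint_of_exp_eq (hexp t)
  have hw' : ∀ t, HasDerivAt w
      ⟨-(sin (-(w t).im) ^ 2 * φ (γ t)), -angularSpeed φ (w t).re (-(w t).im)⟩ t := by
    intro t
    have hquot := phiVF_div_polarPoint φ (w t).re (-(w t).im)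
    rw [← hpolar t] at hquot
    exact hquot ▸ hw t
  refine ⟨fun t => (w t).re, fun t => -(w t).im, -n, hpolar, fun t => ?_, fun t => ?_,
    fun t => ?_, fun t => ?_⟩
  · exact Complex.reCLM.hasFDerivAt.comp_hasDerivAt t (hw' t)
  · exact (Complex.imCLM.hasFDerivAt.comp_hasDerivAt t (hw' t)).neg.congr_deriv (neg_neg _)
  · simp [hn]
  · simp only [hn]
    simp [add_comm]

theorem exists_isPolarProfile (hγ : IsCycle (phiVF φ) γ T) (hφ : Continuous fun t => φ (γ t))
    (hA : ∀ t, 0 < angularMomentum φ (γ t)) :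
    ∃ u N, IsPolarProfile φ u N ∧ range γ = range fun θ => polarPoint (u θ) θ := by
  obtain ⟨ρ, ψ, n, hpolar, hρ, hψ, hρ_per, hψ_add⟩ := hγ.exists_polar_lift hφ
  have hspeed : ∀ t, 0 < angularSpeed φ (ρ t) (ψ t) := by
    intro t
    have hpos := hA t
    rw [hpolar t, angularMomentum_polarPoint] at hpos
    exact pos_of_mul_pos_right hpos (sq_nonneg _)
  have hturn : 0 < n * (2 * π) := by
    have := strictMono_of_hasDerivAt_pos hψ hspeed (lt_add_of_pos_right 0 hγ.2.1)
    rwa [hψ_add, lt_add_iff_pos_right] at this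
  lift n to ℕ using by exact_mod_cast (pos_of_mul_pos_left hturn two_pi_pos.le).le
  obtain ⟨e, he, he_add, he'⟩ := exists_orderIso_of_hasDerivAt_pos hψ hspeed hturn hψ_add
  have hψe : ∀ θ, ψ (e.symm θ) = θ := fun θ => by rw [← he, e.apply_symm_apply]
  have hpolar' : ∀ θ, γ (e.symm θ) = polarPoint (ρ (e.symm θ)) θ := by
    intro θ
    rw [hpolar, hψe]
  refine ⟨ρ ∘ e.symm, n, ⟨?_, fun θ => ?_, fun θ => ?_, fun θ => ?_⟩, ?_⟩
  · exact_mod_cast pos_of_mul_pos_left hturn two_pi_pos.le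
  · exact (congrArg ρ (he_add θ)).trans (hρ_per _)
  · simpa only [Function.comp_apply, hψe] using hspeed (e.symm θ)
  · have h := (hρ (e.symm θ)).comp θ (he' θ)
    rwa [hψe, hpolar', ← div_eq_mul_inv] at h
  · rw [← e.symm.surjective.range_comp γ]
    exact congrArg range (funext hpolar')

end IsCycle

end Cycle

section Uniqueness

variable {φ : ℝ × ℝ → ℝ} {Ω : Set (ℝ × ℝ)}

namespace IsPolarProfile

variable {u₁ u₂ : ℝ → ℝ} {N₁ N₂ : ℕ}

theorem hasDerivAt_sub_sq (h₁ : IsPolarProfile φ u₁ N₁) (h₂ : IsPolarProfile φ u₂ N₂) (θ : ℝ) :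
    HasDerivAt (fun θ => (u₂ θ - u₁ θ) ^ 2)
      (-(2 * sin θ ^ 2 *
          ((u₂ θ - u₁ θ) * (φ (polarPoint (u₂ θ) θ) - φ (polarPoint (u₁ θ) θ))) /
        (angularSpeed φ (u₂ θ) θ * angularSpeed φ (u₁ θ) θ))) θ := by
  refine (((h₂.hasDerivAt θ).sub (h₁.hasDerivAt θ)).pow 2).congr_deriv ?_
  have hne₁ := (h₁.angularSpeed_pos θ).ne'
  have hne₂ := (h₂.angularSpeed_pos θ).ne'
  rw [div_sub_div _ _ hne₂ hne₁, ← mul_div_assoc, ← neg_div]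
  congr 1
  simp only [angularSpeed, Pi.sub_apply]
  ring

theorem sub_sq_eq (h₁ : IsPolarProfile φ u₁ N₁) (h₂ : IsPolarProfile φ u₂ N₂)
    (hmono : ∀ θ,
      0 ≤ (u₂ θ - u₁ θ) * (φ (polarPoint (u₂ θ) θ) - φ (polarPoint (u₁ θ) θ))) (θ θ' : ℝ) :
    (u₂ θ - u₁ θ) ^ 2 = (u₂ θ' - u₁ θ') ^ 2 := by
  have hperiod : (0 : ℝ) < N₂ * (N₁ * (2 * π)) := by
    have := h₁.winding_pos
    have := h₂.winding_pos
    positivity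
  have hper₁ : Function.Periodic u₁ (N₂ * (N₁ * (2 * π))) := h₁.periodic.nat_mul N₂
  have hper₂ : Function.Periodic u₂ (N₂ * (N₁ * (2 * π))) := by
    rw [mul_left_comm]
    exact h₂.periodic.nat_mul N₁
  have hanti : Antitone fun θ => (u₂ θ - u₁ θ) ^ 2 :=
    antitone_of_hasDerivAt_nonpos (h₁.hasDerivAt_sub_sq h₂) fun θ =>
      neg_nonpos.2 (div_nonneg (mul_nonneg (by positivity) (hmono θ))
        (mul_pos (h₂.angularSpeed_pos θ) (h₁.angularSpeed_pos θ)).le)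
  exact eq_of_antitone_of_periodic hperiod hanti
    (fun θ => by simp only [hper₁ θ, hper₂ θ]) θ θ'

theorem apply_polarPoint_eq (h₁ : IsPolarProfile φ u₁ N₁) (h₂ : IsPolarProfile φ u₂ N₂)
    (hconst : ∀ θ θ', (u₂ θ - u₁ θ) ^ 2 = (u₂ θ' - u₁ θ') ^ 2) {θ : ℝ} (hsin : sin θ ≠ 0)
    (hne : u₁ θ ≠ u₂ θ) : φ (polarPoint (u₁ θ) θ) = φ (polarPoint (u₂ θ) θ) := by
  have hzero : HasDerivAt (fun θ => (u₂ θ - u₁ θ) ^ 2) 0 θ := by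
    simp only [hconst _ θ]
    exact hasDerivAt_const _ _
  have hprod := (h₁.hasDerivAt_sub_sq h₂ θ).unique hzero
  have hu : u₂ θ - u₁ θ ≠ 0 := sub_ne_zero.2 hne.symm
  simp only [neg_eq_zero, div_eq_zero_iff, mul_eq_zero, hu, hsin, (h₁.angularSpeed_pos θ).ne',
    (h₂.angularSpeed_pos θ).ne', pow_eq_zero_iff two_ne_zero, two_ne_zero, or_false,
    false_or] at hprod
  exact (sub_eq_zero.1 hprod).symm

theorem eq_of_radialDeriv_pos (h₁ : IsPolarProfile φ u₁ N₁) (h₂ : IsPolarProfile φ u₂ N₂)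
    (hφ : ∀ p ∈ Ω, DifferentiableAt ℝ φ p) (hstar : StarConvex ℝ 0 Ω)
    (hν : ∀ p ∈ Ω, 0 ≤ radialDeriv φ p)
    (hu₁ : ∀ θ, polarPoint (u₁ θ) θ ∈ Ω) (hu₂ : ∀ θ, polarPoint (u₂ θ) θ ∈ Ω)
    {θ₀ : ℝ} (hsin : sin θ₀ ≠ 0) (hpos : 0 < radialDeriv φ (polarPoint (u₁ θ₀) θ₀)) :
    u₁ = u₂ := by
  have hmono := monotoneOn_comp_polarPoint hφ hstar hν
  have hconst := h₁.sub_sq_eq h₂ fun θ =>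
    (monotoneOn_id.monovaryOn (hmono θ)).sub_mul_sub_nonneg (hu₁ θ) (hu₂ θ)
  have hθ₀ : u₁ θ₀ = u₂ θ₀ := by
    by_contra hne
    have hsub : uIcc (u₁ θ₀) (u₂ θ₀) ⊆ {ρ | polarPoint ρ θ₀ ∈ Ω} :=
      (isLowerSet_setOf_polarPoint_mem hstar θ₀).ordConnected.uIcc_subset (hu₁ θ₀) (hu₂ θ₀)
    exact hpos.ne' (deriv_eq_zero_of_monotoneOn_uIcc hne ((hmono θ₀).mono hsub)
      (h₁.apply_polarPoint_eq h₂ hconst hsin hne) (hasDerivAt_comp_polarPoint (hφ _ (hu₁ θ₀))))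
  funext θ
  have hsq := hconst θ θ₀
  rw [hθ₀, sub_self, zero_pow two_ne_zero, sq_eq_zero_iff, sub_eq_zero] at hsq
  exact hsq.symm

end IsPolarProfile

variable {γ γ₁ γ₂ : ℝ → ℝ × ℝ} {T T₁ T₂ : ℝ}

namespace IsCycle

theorem range_eq_range (hγ₁ : IsCycle (phiVF φ) γ₁ T₁) (hγ₂ : IsCycle (phiVF φ) γ₂ T₂)
    (hΩ : IsOpen Ω) (hstar : StarConvex ℝ 0 Ω) (hφ : ContDiffOn ℝ 1 φ Ω)
    (hν : ∀ p ∈ Ω, 0 ≤ radialDeriv φ p) (hγ₁Ω : range γ₁ ⊆ Ω) (hγ₂Ω : range γ₂ ⊆ Ω)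
    (hstrict : ∃ p ∈ range γ₁, p.2 ≠ 0 ∧ 0 < radialDeriv φ p) : range γ₁ = range γ₂ := by
  obtain ⟨u₁, N₁, h₁, hrange₁⟩ := hγ₁.exists_isPolarProfile
    (hγ₁.continuous_comp hφ.continuousOn hγ₁Ω) (hγ₁.angularMomentum_pos hΩ hφ hν hγ₁Ω)
  obtain ⟨u₂, N₂, h₂, hrange₂⟩ := hγ₂.exists_isPolarProfile
    (hγ₂.continuous_comp hφ.continuousOn hγ₂Ω) (hγ₂.angularMomentum_pos hΩ hφ hν hγ₂Ω)
  rw [hrange₁] at hγ₁Ω hstrict ⊢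
  rw [hrange₂] at hγ₂Ω ⊢
  obtain ⟨_, ⟨θ₀, rfl⟩, hy, hpos⟩ := hstrict
  have hsin : sin θ₀ ≠ 0 := fun h => hy (by simp [polarPoint, h])
  rw [h₁.eq_of_radialDeriv_pos h₂ (fun p => differentiableAt_of_contDiffOn hΩ hφ) hstar hν
    (fun θ => hγ₁Ω (mem_range_self θ)) (fun θ => hγ₂Ω (mem_range_self θ)) hsin hpos]

theorem exists_mem_range_of_frequently (hγ : IsCycle (phiVF φ) γ T)
    (hφ : Continuous fun t => φ (γ t)) (hA : ∀ t, 0 < angularMomentum φ (γ t)) {P : ℝ → Prop}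
    (hP : ∃ᶠ x in 𝓝 0, P x) : ∃ p ∈ range γ, p.2 ≠ 0 ∧ P p.1 := by
  obtain ⟨u, N, -, hrange⟩ := hγ.exists_isPolarProfile hφ hA
  obtain ⟨t₀, ht₀⟩ : polarPoint (u (π / 2)) (π / 2) ∈ range γ := hrange ▸ mem_range_self (π / 2)
  have hx : (γ t₀).1 = 0 := by simp [ht₀, polarPoint]
  have hy : (γ t₀).2 ≠ 0 := by simp [ht₀, polarPoint]
  have hmap : map (fun t => (γ t).1) (𝓝 t₀) = 𝓝 0 := by
    rw [← hx]
    exact (hasStrictDerivAt_of_hasDerivAt_of_continuousAt (.of_forall hγ.hasDerivAt_fst)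
      hγ.continuous.snd.continuousAt).map_nhds_eq hy
  rw [← hmap, frequently_map] at hP
  obtain ⟨t, hPt, hyt⟩ := (hP.and_eventually
    (hγ.continuous.snd.continuousAt.eventually_ne hy)).exists
  exact ⟨γ t, mem_range_self t, hyt, hPt⟩

end IsCycle

end Uniqueness

section Polynomial

variable {J : ℕ} {f : ℕ → ℝ → ℝ} {a b : ℝ}

/-- The factor `φ = Σ_{j=1}^{J} f_j(x) y^(j-1)` for which `polyVF J f` is `phiVF φ`. -/
def polyPhi (J : ℕ) (f : ℕ → ℝ → ℝ) (p : ℝ × ℝ) : ℝ :=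
  ∑ j ∈ Finset.Icc 1 J, f j p.1 * p.2 ^ (j - 1)

/-- The quantity `x f_j'(x) + (j - 1) f_j(x)`, which is the coefficient of `y^(j-1)` in the radial
derivative of `polyPhi J f`. -/
def radialCoeff (f : ℕ → ℝ → ℝ) (j : ℕ) (x : ℝ) : ℝ :=
  x * deriv (f j) x + ((j : ℝ) - 1) * f j x

theorem polyVF_eq_phiVF (J : ℕ) (f : ℕ → ℝ → ℝ) : polyVF J f = phiVF (polyPhi J f) := by
  funext p
  simp only [polyVF, phiVF, polyPhi, Finset.mul_sum]
  congr 2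
  refine Finset.sum_congr rfl fun j hj => ?_
  rw [← mul_pow_sub_one (Nat.one_le_iff_ne_zero.1 (Finset.mem_Icc.1 hj).1) p.2]
  ring

theorem contDiffOn_polyPhi (hf : ∀ j ∈ Finset.Icc 1 J, ContDiffOn ℝ 1 (f j) (Ioo a b)) :
    ContDiffOn ℝ 1 (polyPhi J f) (Ioo a b ×ˢ univ) :=
  ContDiffOn.sum fun j hj =>
    ((hf j hj).comp contDiffOn_fst fun _ hp => hp.1).mul (contDiffOn_snd.pow (j - 1))

theorem fderiv_polyPhi_apply {p : ℝ × ℝ}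
    (hf : ∀ j ∈ Finset.Icc 1 J, DifferentiableAt ℝ (f j) p.1) (v : ℝ × ℝ) :
    fderiv ℝ (polyPhi J f) p v = ∑ j ∈ Finset.Icc 1 J,
      (deriv (f j) p.1 * v.1 * p.2 ^ (j - 1) +
        f j p.1 * (((j : ℝ) - 1) * p.2 ^ (j - 1 - 1) * v.2)) := by
  have hterm : ∀ j ∈ Finset.Icc 1 J,
      HasFDerivAt (fun q : ℝ × ℝ => f j q.1 * q.2 ^ (j - 1)) _ p := fun j hj =>
    ((hf j hj).hasDerivAt.comp_hasFDerivAt p hasFDerivAt_fst).mul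
      ((hasFDerivAt_snd (𝕜 := ℝ) (E := ℝ) (F := ℝ) (p := p)).pow (j - 1))
  have hsum : HasFDerivAt (polyPhi J f) _ p := HasFDerivAt.fun_sum hterm
  rw [hsum.fderiv, sum_apply]
  refine Finset.sum_congr rfl fun j hj => ?_
  simp only [Function.comp_apply, nsmul_eq_mul, Nat.cast_pred (Finset.mem_Icc.1 hj).1, add_apply,
    smul_apply, ContinuousLinearMap.coe_snd', smul_eq_mul, ContinuousLinearMap.coe_fst']
  ring

theorem cast_sub_one_mul_pow_sub_one {j : ℕ} (hj : 1 ≤ j) (y : ℝ) :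
    ((j : ℝ) - 1) * y ^ (j - 1 - 1) * y = ((j : ℝ) - 1) * y ^ (j - 1) := by
  obtain rfl | hj := hj.eq_or_lt
  · simp
  · rw [mul_assoc, pow_sub_one_mul (Nat.sub_pos_of_lt hj).ne']

theorem radialDeriv_polyPhi {p : ℝ × ℝ}
    (hf : ∀ j ∈ Finset.Icc 1 J, DifferentiableAt ℝ (f j) p.1) :
    radialDeriv (polyPhi J f) p = ∑ j ∈ Finset.Icc 1 J, radialCoeff f j p.1 * p.2 ^ (j - 1) := by
  rw [radialDeriv, fderiv_polyPhi_apply hf]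
  refine Finset.sum_congr rfl fun j hj => ?_
  rw [cast_sub_one_mul_pow_sub_one (Finset.mem_Icc.1 hj).1, radialCoeff]
  ring

theorem phiDiv_polyPhi {p : ℝ × ℝ}
    (hf : ∀ j ∈ Finset.Icc 1 J, DifferentiableAt ℝ (f j) p.1) :
    phiDiv (polyPhi J f) p = polyDiv J f p := by
  rw [phiDiv, polyDiv, fderiv_polyPhi_apply hf, polyPhi, Finset.mul_sum, ← Finset.sum_add_distrib]
  congr 1
  refine Finset.sum_congr rfl fun j hj => ?_
  linear_combination f j p.1 * cast_sub_one_mul_pow_sub_one (Finset.mem_Icc.1 hj).1 p.2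

theorem radialCoeff_mul_pow_nonneg {j : ℕ} {x : ℝ}
    (heven : Even j → radialCoeff f j x = 0) (hodd : Odd j → 0 ≤ radialCoeff f j x) (y : ℝ) :
    0 ≤ radialCoeff f j x * y ^ (j - 1) := by
  rcases j.even_or_odd with hj | hj
  · rw [heven hj, zero_mul]
  · exact mul_nonneg (hodd hj) (hj.tsub_odd odd_one |>.pow_nonneg y)

theorem radialCoeff_eq_zero {j : ℕ} {x : ℝ} (hf : ∀ x ∈ Ioo a b, f j x = 0) (hx : x ∈ Ioo a b) :
    radialCoeff f j x = 0 := by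
  have hzero : f j =ᶠ[𝓝 x] fun _ => 0 := eventually_of_mem (isOpen_Ioo.mem_nhds hx) hf
  rw [radialCoeff, hzero.deriv_eq, deriv_const, hf x hx, mul_zero, mul_zero, add_zero]

theorem radialDeriv_polyPhi_nonneg {p : ℝ × ℝ}
    (hf : ∀ j ∈ Finset.Icc 1 J, DifferentiableAt ℝ (f j) p.1)
    (hterm : ∀ j ∈ Finset.Icc 1 J, 0 ≤ radialCoeff f j p.1 * p.2 ^ (j - 1)) :
    0 ≤ radialDeriv (polyPhi J f) p := by
  rw [radialDeriv_polyPhi hf]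
  exact Finset.sum_nonneg hterm

theorem radialDeriv_polyPhi_pos {p : ℝ × ℝ}
    (hf : ∀ j ∈ Finset.Icc 1 J, DifferentiableAt ℝ (f j) p.1)
    (hterm : ∀ j ∈ Finset.Icc 1 J, 0 ≤ radialCoeff f j p.1 * p.2 ^ (j - 1)) (hy : p.2 ≠ 0)
    (hne : ∃ j ∈ Finset.Icc 1 J, radialCoeff f j p.1 ≠ 0) :
    0 < radialDeriv (polyPhi J f) p := by
  obtain ⟨j, hj, hne⟩ := hne
  rw [radialDeriv_polyPhi hf]
  exact Finset.sum_pos' hterm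
    ⟨j, hj, (hterm j hj).lt_of_ne' (mul_ne_zero hne (pow_ne_zero _ hy))⟩

end Polynomial

theorem statement3_general (a b : ℝ) (ha : a < 0) (hb : 0 < b) (J : ℕ) (f : ℕ → ℝ → ℝ)
    (hf : ∀ j ∈ Finset.Icc 1 J, ContDiffOn ℝ 1 (f j) (Ioo a b))
    (heven : ∀ j ∈ Finset.Icc 1 J, Even j → ∀ x ∈ Ioo a b, f j x = 0)
    (hodd : ∀ j ∈ Finset.Icc 1 J, Odd j → ∀ x ∈ Ioo a b, 0 ≤ radialCoeff f j x)
    (hfreq : ∃ᶠ x in 𝓝 0, ∃ j ∈ Finset.Icc 1 J, radialCoeff f j x ≠ 0) :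
    (∀ γ₁ T₁ γ₂ T₂,
        IsCycle (polyVF J f) γ₁ T₁ → range γ₁ ⊆ Ioo a b ×ˢ (univ : Set ℝ) →
        IsCycle (polyVF J f) γ₂ T₂ → range γ₂ ⊆ Ioo a b ×ˢ (univ : Set ℝ) →
        range γ₁ = range γ₂) ∧
    (∀ γ T,
        IsCycle (polyVF J f) γ T → range γ ⊆ Ioo a b ×ˢ (univ : Set ℝ) →
        ∫ t in (0 : ℝ)..T, polyDiv J f (γ t) < 0) := by
  have hdiff : ∀ p ∈ Ioo a b ×ˢ (univ : Set ℝ), ∀ j ∈ Finset.Icc 1 J,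
      DifferentiableAt ℝ (f j) p.1 := fun p hp j hj =>
    differentiableAt_of_contDiffOn isOpen_Ioo (hf j hj) hp.1
  have hterm : ∀ p ∈ Ioo a b ×ˢ (univ : Set ℝ), ∀ j ∈ Finset.Icc 1 J,
      0 ≤ radialCoeff f j p.1 * p.2 ^ (j - 1) := fun p hp j hj =>
    radialCoeff_mul_pow_nonneg (fun h => radialCoeff_eq_zero (heven j hj h) hp.1)
      (fun h => hodd j hj h _ hp.1) p.2
  have hΩ : IsOpen (Ioo a b ×ˢ (univ : Set ℝ)) := isOpen_Ioo.prod isOpen_univ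
  have hstar : StarConvex ℝ 0 (Ioo a b ×ˢ (univ : Set ℝ)) :=
    ((convex_Ioo a b).prod convex_univ).starConvex ⟨⟨ha, hb⟩, mem_univ _⟩
  have hφ := contDiffOn_polyPhi hf
  have hν : ∀ p ∈ Ioo a b ×ˢ (univ : Set ℝ), 0 ≤ radialDeriv (polyPhi J f) p := fun p hp =>
    radialDeriv_polyPhi_nonneg (hdiff p hp) (hterm p hp)
  have hstrict : ∀ γ T, IsCycle (phiVF (polyPhi J f)) γ T → range γ ⊆ Ioo a b ×ˢ (univ : Set ℝ) →
      ∃ p ∈ range γ, p.2 ≠ 0 ∧ 0 < radialDeriv (polyPhi J f) p := by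
    intro γ T hγ hγΩ
    obtain ⟨p, hp, hy, hne⟩ := hγ.exists_mem_range_of_frequently
      (hγ.continuous_comp hφ.continuousOn hγΩ) (hγ.angularMomentum_pos hΩ hφ hν hγΩ) hfreq
    exact ⟨p, hp, hy, radialDeriv_polyPhi_pos (hdiff p (hγΩ hp)) (hterm p (hγΩ hp)) hy hne⟩
  rw [polyVF_eq_phiVF]
  refine ⟨fun γ₁ T₁ γ₂ T₂ hγ₁ hγ₁Ω hγ₂ hγ₂Ω => ?_, fun γ T hγ hγΩ => ?_⟩
  · exact hγ₁.range_eq_range hγ₂ hΩ hstar hφ hν hγ₁Ω hγ₂Ω (hstrict γ₁ T₁ hγ₁ hγ₁Ω)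
  · simp only [← phiDiv_polyPhi (hdiff _ (hγΩ (mem_range_self _)))]
    exact hγ.integral_phiDiv_neg hΩ hφ hν hγΩ (hstrict γ T hγ hγΩ)

/-- if `f_j ≡ 0` for even `j`, `x f_j'(x) + (j−1) f_j(x) ≥ 0` on
`(a,b)` for odd `j`, and condition (Seq) holds, then the system
ẋ = y, ẏ = −x − Σ_j f_j(x) yʲ has at most one limit cycle in `(a,b) × ℝ`,
which is hyperbolic. -/
theorem statement3 (a b : ℝ) (ha : a < 0) (hb : 0 < b) (J : ℕ)
    (f : ℕ → ℝ → ℝ)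
    (hf : ∀ j ∈ Finset.Icc 1 J, ContDiffOn ℝ 1 (f j) (Ioo a b))
    (heven : ∀ j ∈ Finset.Icc 1 J, Even j → ∀ x : ℝ, f j x = 0)
    (hodd : ∀ j ∈ Finset.Icc 1 J, Odd j → ∀ x ∈ Ioo a b,
      x * deriv (f j) x + ((j : ℝ) - 1) * f j x ≥ 0)
    (hseq : ∃ xs : ℕ → ℝ, (∀ m, xs m ∈ Ioo a b) ∧ Tendsto xs atTop (𝓝 0) ∧
      ∀ m, ∃ j ∈ Finset.Icc 1 J,
        xs m * deriv (f j) (xs m) + ((j : ℝ) - 1) * f j (xs m) ≠ 0) :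
    (∀ (γ₁ : ℝ → ℝ × ℝ) (T₁ : ℝ) (γ₂ : ℝ → ℝ × ℝ) (T₂ : ℝ),
        IsLimitCycle (polyVF J f) γ₁ T₁ → range γ₁ ⊆ Ioo a b ×ˢ (univ : Set ℝ) →
        IsLimitCycle (polyVF J f) γ₂ T₂ → range γ₂ ⊆ Ioo a b ×ˢ (univ : Set ℝ) →
        range γ₁ = range γ₂) ∧
    (∀ (μ : ℝ → ℝ × ℝ) (T : ℝ),
        IsLimitCycle (polyVF J f) μ T → range μ ⊆ Ioo a b ×ˢ (univ : Set ℝ) →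
        (∫ t in (0:ℝ)..T, polyDiv J f (μ t)) ≠ 0) := by
  obtain ⟨xs, -, hlim, hne⟩ := hseq
  obtain ⟨huniq, hneg⟩ := statement3_general a b ha hb J f hf
    (fun j hj hj' x _ => heven j hj hj' x) hodd (hlim.frequently (.of_forall hne))
  exact ⟨fun γ₁ T₁ γ₂ T₂ h₁ hΩ₁ h₂ hΩ₂ => huniq γ₁ T₁ γ₂ T₂ h₁.1 hΩ₁ h₂.1 hΩ₂,
    fun μ T hμ hΩ => (hneg μ T hμ.1 hΩ).ne⟩
end
end

section
/- Let f₁, f₃, f₅, …, f_{2N+1} : ℝ → ℝ be continuously differentiable, set all even-index coefficients f_{2k} ≡ 0, and assume x·f_{2k+1}'(x) + 2k·f_{2k+1}(x) ≥ 0 for all x ∈ ℝ and k = 1, …, N. Assume additionally that there exists ε > 0 with f₁(x) ≥ 0 for all x ∈ ℝ \ [−ε, ε], and that there exists 1 ≤ k̄ ≤ N such that f_{2k̄+1}(x) > 0 for all x ∈ [−ε, ε]. Then there exists M > 0 such that every forward-complete solution of the system ẋ = y, ẏ = −x − y·Σ_{k=0}^{N} f_{2k+1}(x)·y^{2k} definitely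 enters the disk D_M = {(x,y) : x² + y² ≤ M²} and remains inside it. -/
open Set Filter Metric Real Topology intervalIntegral

noncomputable section

/-- The vector field of the system ẋ = y, ẏ = −x − y·Σ_{k=0}^{N} f_{2k+1}(x) y^{2k},
where `o k` stands for `f_{2k+1}`. -/
def oddVF (N : ℕ) (o : ℕ → ℝ → ℝ) : ℝ × ℝ → ℝ × ℝ :=
  fun p => (p.2, -p.1 - p.2 * ∑ k ∈ Finset.range (N + 1), o k p.1 * p.2 ^ (2 * k))

/-- The divergence of `oddVF N o`. -/
def oddDiv (N : ℕ) (o : ℕ → ℝ → ℝ) : ℝ × ℝ → ℝ :=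
  fun p => -∑ k ∈ Finset.range (N + 1), (2 * (k : ℝ) + 1) * o k p.1 * p.2 ^ (2 * k)

/-!
Write the system as `ẋ = y`, `ẏ = -x - y φ(x, y)`, so that `x² + y²` has derivative `-2 y² φ`.

If `φ > 0` off the `x`-axis outside a disk, then `x² + y²` cannot grow outside that disk, so the
disk is a trap and every solution is bounded. A solution cannot stay in a compact annulus
forever: on the `x`-axis the decay of `x² + y²` degenerates, but there `x y` has derivative
`-x² < 0`, and therefore `C (x² + y²) + x y` decreases at a uniform rate on the annulus once `C` is
large. This avoids LaSalle's principle and any uniqueness of solutions.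

The condition `x f'(x) + n f(x) ≥ 0` says that `s ↦ sⁿ f(s x)` is nondecreasing on `[0, ∞)`, which
makes all higher coefficients nonnegative, and `f_{2k̄+1}` positive everywhere. Outside the strip
`|x| ≤ ε` this gives `φ > 0` when `y ≠ 0`; inside the strip the term of index `k̄` beats the
possibly negative `f₁` as soon as `y²` is large.
-/

section Euler

variable {E : Type*} [NormedAddCommGroup E] [NormedSpace ℝ E] {n : ℕ} {f : E → ℝ}

lemma monotoneOn_pow_mul_comp_smul (hf : Differentiable ℝ f)
    (heuler : ∀ x, 0 ≤ fderiv ℝ f x x + n * f x) (x : E) :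
    MonotoneOn (fun s : ℝ => s ^ n * f (s • x)) (Ici 0) := by
  have hderiv (s : ℝ) : HasDerivAt (fun s : ℝ => s ^ n * f (s • x))
      (n * s ^ (n - 1) * f (s • x) + s ^ n * fderiv ℝ f (s • x) x) s := by
    have hray : HasDerivAt (fun s : ℝ => s • x) x s := by
      simpa only [id, one_smul] using (hasDerivAt_id s).smul_const x
    exact (hasDerivAt_pow n s).mul ((hf _).hasFDerivAt.comp_hasDerivAt s hray)
  refine monotoneOn_of_hasDerivWithinAt_nonneg (convex_Ici 0)
    (fun s _ => (hderiv s).continuousAt.continuousWithinAt)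
    (fun s _ => (hderiv s).hasDerivWithinAt) fun s hs => ?_
  have hs : 0 < s := by simpa only [interior_Ici, mem_Ioi] using hs
  refine (mul_nonneg_iff_of_pos_left hs).1 ?_
  calc 0 ≤ s ^ n * (fderiv ℝ f (s • x) (s • x) + n * f (s • x)) :=
        mul_nonneg (pow_nonneg hs.le n) (heuler _)
    _ = s * (n * s ^ (n - 1) * f (s • x) + s ^ n * fderiv ℝ f (s • x) x) := by
        rw [map_smul, smul_eq_mul]
        cases n with
        | zero => simp only [pow_zero, CharP.cast_eq_zero]; ring
        | succ m => rw [Nat.add_sub_cancel]; ring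

lemma nonneg_of_euler_nonneg (hn : n ≠ 0) (hf : Differentiable ℝ f)
    (heuler : ∀ x, 0 ≤ fderiv ℝ f x x + n * f x) (x : E) : 0 ≤ f x := by
  simpa [hn] using
    monotoneOn_pow_mul_comp_smul hf heuler x self_mem_Ici (mem_Ici.2 zero_le_one) zero_le_one

lemma pos_of_euler_nonneg_of_zero_pos (hf : Differentiable ℝ f)
    (heuler : ∀ x, 0 ≤ fderiv ℝ f x x + n * f x) (hzero : 0 < f 0) (x : E) : 0 < f x := by
  have hcont : ContinuousAt (fun s : ℝ => f (s • x)) 0 :=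
    (hf.continuous.comp (continuous_id.smul continuous_const)).continuousAt
  have hnear : ∀ᶠ s in 𝓝[>] (0 : ℝ), 0 < f (s • x) :=
    nhdsWithin_le_nhds (hcont.eventually (lt_mem_nhds (by simpa only [zero_smul] using hzero)))
  obtain ⟨s, hfs, hs⟩ := (hnear.and (Ioc_mem_nhdsGT one_pos)).exists
  calc 0 < s ^ n * f (s • x) := mul_pos (pow_pos hs.1 n) hfs
    _ ≤ 1 ^ n * f ((1 : ℝ) • x) :=
        monotoneOn_pow_mul_comp_smul hf heuler x hs.1.le (mem_Ici.2 zero_le_one) hs.2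
    _ = f x := by rw [one_pow, one_mul, one_smul]

end Euler

section Compactness

variable {X : Type*} [TopologicalSpace X] {K : Set X}

lemma exists_pos_forall_lt_mul_of_isCompact {P Q : X → ℝ} (hK : IsCompact K)
    (hP : ContinuousOn P K) (hQ : ContinuousOn Q K) (hP_nonneg : ∀ x ∈ K, 0 ≤ P x)
    (hQ_neg : ∀ x ∈ K, P x = 0 → Q x < 0) : ∃ C > 0, ∀ x ∈ K, Q x < C * P x := by
  suffices ∃ C > 0, ∀ x ∈ K ∩ K, Q x < C * P x by simpa only [inter_self] using this
  refine hK.induction_on (p := fun s => ∃ C > 0, ∀ x ∈ s ∩ K, Q x < C * P x)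
    ⟨1, one_pos, by simp⟩ ?_ ?_ ?_
  · rintro s t hst ⟨C, hC, h⟩
    exact ⟨C, hC, fun x hx => h x ⟨hst hx.1, hx.2⟩⟩
  · rintro s t ⟨C, hC, hs⟩ ⟨D, -, ht⟩
    refine ⟨max C D, lt_max_of_lt_left hC, fun x hx => ?_⟩
    rcases hx with ⟨hxs | hxt, hxK⟩
    · exact (hs x ⟨hxs, hxK⟩).trans_le
        (mul_le_mul_of_nonneg_right (le_max_left C D) (hP_nonneg x hxK))
    · exact (ht x ⟨hxt, hxK⟩).trans_le
        (mul_le_mul_of_nonneg_right (le_max_right C D) (hP_nonneg x hxK))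
  · intro x hx
    obtain ⟨C, hC, hxC⟩ : ∃ C > 0, Q x < C * P x := by
      rcases (hP_nonneg x hx).eq_or_lt with hzero | hpos
      · exact ⟨1, one_pos, by simpa only [← hzero, mul_zero] using hQ_neg x hx hzero.symm⟩
      · obtain ⟨C, hC⟩ := exists_gt (max 0 (Q x / P x))
        exact ⟨C, (le_max_left _ _).trans_lt hC,
          (div_lt_iff₀ hpos).1 ((le_max_right _ _).trans_lt hC)⟩
    exact ⟨{y | Q y < C * P y}, (hQ x hx).eventually_lt ((hP x hx).const_mul C) hxC,
      C, hC, fun y hy => hy.1⟩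

lemma exists_notMem_of_hasDerivAt_neg {γ : ℝ → X} {t₀ : ℝ} {W L : X → ℝ} (hK : IsCompact K)
    (hW : ContinuousOn W K) (hL : ContinuousOn L K) (hL_neg : ∀ x ∈ K, L x < 0)
    (hderiv : ∀ t ≥ t₀, HasDerivAt (fun s => W (γ s)) (L (γ t)) t) : ∃ t ≥ t₀, γ t ∉ K := by
  by_contra! hstay
  obtain ⟨η, hη, hLη⟩ := hK.exists_forall_le' hL.neg fun x hx => neg_pos.2 (hL_neg x hx)
  obtain ⟨m, hm⟩ := hK.bddBelow_image hW
  have hWm (t : ℝ) (ht : t ≥ t₀) : m ≤ W (γ t) := hm (mem_image_of_mem W (hstay t ht))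
  have hdecay (t : ℝ) (ht : t ≥ t₀) : W (γ t) - W (γ t₀) ≤ -η * (t - t₀) := by
    refine (convex_Ici t₀).image_sub_le_mul_sub_of_deriv_le (f := fun s => W (γ s))
      (fun s hs => (hderiv s hs).continuousAt.continuousWithinAt)
      (fun s hs => (hderiv s (interior_subset hs)).differentiableAt.differentiableWithinAt)
      (fun s hs => ?_) t₀ self_mem_Ici t ht ht
    rw [(hderiv s (interior_subset hs)).deriv]
    exact le_neg_of_le_neg (hLη _ (hstay s (interior_subset hs)))
  have hlate : t₀ + ((W (γ t₀) - m) / η + 1) ≥ t₀ := by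
    have := div_nonneg (sub_nonneg.2 (hWm t₀ le_rfl)) hη.le
    linarith
  have hdrop := hdecay _ hlate
  have hrate : -η * (t₀ + ((W (γ t₀) - m) / η + 1) - t₀) = -(W (γ t₀) - m) - η := by
    field_simp
    ring
  linarith [hWm _ hlate]

end Compactness

lemma le_of_hasDerivAt_nonpos_above {f f' : ℝ → ℝ} {c T t : ℝ}
    (hderiv : ∀ s ≥ T, HasDerivAt f (f' s) s) (hnonpos : ∀ s ≥ T, c < f s → f' s ≤ 0)
    (hT : f T ≤ c) (ht : T ≤ t) : f t ≤ c := by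
  have hcont : ContinuousOn f (Icc T t) :=
    fun s hs => (hderiv s hs.1).continuousAt.continuousWithinAt
  obtain ⟨r, ⟨hr, hfr⟩, hlast⟩ : ∃ r, IsGreatest (Icc T t ∩ f ⁻¹' Iic c) r :=
    (isCompact_Icc.of_isClosed_subset
      (hcont.preimage_isClosed_of_isClosed isClosed_Icc isClosed_Iic)
      inter_subset_left).exists_isGreatest ⟨T, left_mem_Icc.2 ht, hT⟩
  have habove (s : ℝ) (hs : s ∈ Ioo r t) : c < f s := by
    by_contra! hle
    exact hs.1.not_ge (hlast ⟨⟨hr.1.trans hs.1.le, hs.2.le⟩, hle⟩)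
  have hanti : AntitoneOn f (Icc r t) := by
    refine antitoneOn_of_hasDerivWithinAt_nonpos (f' := f') (convex_Icc r t)
      (hcont.mono (Icc_subset_Icc_left hr.1))
      (fun s hs => (hderiv s (hr.1.trans (interior_subset hs).1)).hasDerivWithinAt) fun s hs => ?_
    rw [interior_Icc] at hs
    exact hnonpos s (hr.1.trans hs.1.le) (habove s hs)
  exact (hanti (left_mem_Icc.2 hr.2) (right_mem_Icc.2 hr.2) hr.2).trans hfr

/-- The square `x² + y²` of the Euclidean norm, the Lyapunov function of `phiVF`. It is spelled out
because the norm of `ℝ × ℝ` is the sup norm. -/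
def energy (p : ℝ × ℝ) : ℝ := p.1 ^ 2 + p.2 ^ 2

@[fun_prop]
lemma continuous_energy : Continuous energy := by
  unfold energy
  fun_prop

lemma isCompact_energy_preimage_Icc (a b : ℝ) : IsCompact (energy ⁻¹' Icc a b) := by
  refine (isCompact_Icc (a := ((-√b, -√b) : ℝ × ℝ)) (b := (√b, √b))).of_isClosed_subset
    (isClosed_Icc.preimage continuous_energy) fun p hp => ?_
  have hb : p.1 ^ 2 + p.2 ^ 2 ≤ b := hp.2
  have hfst := abs_le.1 (abs_le_sqrt ((le_add_of_nonneg_right (sq_nonneg p.2)).trans hb))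
  have hsnd := abs_le.1 (abs_le_sqrt ((le_add_of_nonneg_left (sq_nonneg p.1)).trans hb))
  exact ⟨⟨hfst.1, hsnd.1⟩, hfst.2, hsnd.2⟩

section PhiSystem

variable {φ : ℝ × ℝ → ℝ} {γ : ℝ → ℝ × ℝ} {a b c t t₀ : ℝ}

lemma hasDerivAt_fst_of_phiVF (hγ : HasDerivAt γ (phiVF φ (γ t)) t) :
    HasDerivAt (fun s => (γ s).1) (γ t).2 t :=
  hγ.fst

lemma hasDerivAt_snd_of_phiVF (hγ : HasDerivAt γ (phiVF φ (γ t)) t) :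
    HasDerivAt (fun s => (γ s).2) (-(γ t).1 - (γ t).2 * φ (γ t)) t :=
  hγ.snd

lemma hasDerivAt_energy (hγ : HasDerivAt γ (phiVF φ (γ t)) t) :
    HasDerivAt (fun s => energy (γ s)) (-(2 * ((γ t).2 ^ 2 * φ (γ t)))) t := by
  refine (((hasDerivAt_fst_of_phiVF hγ).pow 2).add
    ((hasDerivAt_snd_of_phiVF hγ).pow 2)).congr_deriv ?_
  ring

lemma hasDerivAt_fst_mul_snd (hγ : HasDerivAt γ (phiVF φ (γ t)) t) :
    HasDerivAt (fun s => (γ s).1 * (γ s).2)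
      ((γ t).2 ^ 2 - (γ t).1 ^ 2 - (γ t).1 * (γ t).2 * φ (γ t)) t := by
  refine ((hasDerivAt_fst_of_phiVF hγ).mul (hasDerivAt_snd_of_phiVF hγ)).congr_deriv ?_
  ring

lemma sq_mul_nonneg_of_ne_zero_imp_pos {y u : ℝ} (h : y ≠ 0 → 0 < u) : 0 ≤ y ^ 2 * u := by
  rcases eq_or_ne y 0 with rfl | hy
  · simp
  · exact mul_nonneg (sq_nonneg y) (h hy).le

lemma IsSolOn.energy_le (hγ : IsSolOn (phiVF φ) γ (Ici t₀))
    (hφ : ∀ p, c < energy p → 0 ≤ p.2 ^ 2 * φ p) (hstart : energy (γ t₀) ≤ c) (ht : t₀ ≤ t) :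
    energy (γ t) ≤ c :=
  le_of_hasDerivAt_nonpos_above (f := fun s => energy (γ s))
    (fun s hs => hasDerivAt_energy (hγ s hs)) (fun s _ hs => by linarith [hφ (γ s) hs]) hstart ht

lemma exists_lyapunov_deriv_neg_on_annulus (hφ : Continuous φ) (ha : 0 < a)
    (hpos : ∀ p, a ≤ energy p → p.2 ≠ 0 → 0 < φ p) :
    ∃ C, ∀ p ∈ energy ⁻¹' Icc a b,
      C * -(2 * (p.2 ^ 2 * φ p)) + (p.2 ^ 2 - p.1 ^ 2 - p.1 * p.2 * φ p) < 0 := by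
  have hnonneg (p : ℝ × ℝ) (hp : p ∈ energy ⁻¹' Icc a b) : 0 ≤ 2 * (p.2 ^ 2 * φ p) :=
    mul_nonneg zero_le_two (sq_mul_nonneg_of_ne_zero_imp_pos (hpos p hp.1))
  have haxis (p : ℝ × ℝ) (hp : p ∈ energy ⁻¹' Icc a b) (hzero : 2 * (p.2 ^ 2 * φ p) = 0) :
      p.2 ^ 2 - p.1 ^ 2 - p.1 * p.2 * φ p < 0 := by
    have hy : p.2 = 0 := by
      by_contra hne
      have := hpos p hp.1 hne
      exact absurd hzero (by positivity)
    have henergy : a ≤ p.1 ^ 2 + p.2 ^ 2 := hp.1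
    rw [hy] at henergy ⊢
    linarith
  obtain ⟨C, -, hC⟩ := exists_pos_forall_lt_mul_of_isCompact (isCompact_energy_preimage_Icc a b)
    (by fun_prop) (by fun_prop) hnonneg haxis
  exact ⟨C, fun p hp => by linarith [hC p hp]⟩

lemma IsSolOn.exists_energy_notMem_Icc (hγ : IsSolOn (phiVF φ) γ (Ici t₀)) (hφ : Continuous φ)
    (ha : 0 < a) (hpos : ∀ p, a ≤ energy p → p.2 ≠ 0 → 0 < φ p) :
    ∃ t ≥ t₀, energy (γ t) ∉ Icc a b := by
  obtain ⟨C, hC⟩ := exists_lyapunov_deriv_neg_on_annulus (b := b) hφ ha hpos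
  exact exists_notMem_of_hasDerivAt_neg (K := energy ⁻¹' Icc a b)
    (W := fun p => C * energy p + p.1 * p.2) (isCompact_energy_preimage_Icc a b)
    (by fun_prop) (by fun_prop) hC fun t ht =>
      ((hasDerivAt_energy (hγ t ht)).const_mul C).add (hasDerivAt_fst_mul_snd (hγ t ht))

theorem IsSolOn.exists_forall_energy_le (hγ : IsSolOn (phiVF φ) γ (Ici t₀)) (hφ : Continuous φ)
    (hc : 0 < c) (hpos : ∀ p, c ≤ energy p → p.2 ≠ 0 → 0 < φ p) :
    ∃ T ≥ t₀, ∀ t ≥ T, energy (γ t) ≤ c := by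
  have hdiss (p : ℝ × ℝ) (hp : c < energy p) : 0 ≤ p.2 ^ 2 * φ p :=
    sq_mul_nonneg_of_ne_zero_imp_pos (hpos p hp.le)
  have hbounded (t : ℝ) (ht : t₀ ≤ t) : energy (γ t) ≤ max c (energy (γ t₀)) :=
    hγ.energy_le (fun p hp => hdiss p ((le_max_left _ _).trans_lt hp)) (le_max_right _ _) ht
  obtain ⟨T, hT, hexit⟩ := hγ.exists_energy_notMem_Icc (b := max c (energy (γ t₀))) hφ hc hpos
  have henter : energy (γ T) ≤ c := by
    by_contra! hgt
    exact hexit ⟨hgt.le, hbounded T hT⟩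
  have hγT : IsSolOn (phiVF φ) γ (Ici T) := fun t ht => hγ t (hT.trans ht)
  exact ⟨T, hT, fun t ht => hγT.energy_le hdiss henter ht⟩

end PhiSystem

/-- The damping coefficient `Σ f_{2k+1}(x) y^{2k}`, for which `oddVF` is `phiVF`. -/
def oddDamping (N : ℕ) (o : ℕ → ℝ → ℝ) (p : ℝ × ℝ) : ℝ :=
  ∑ k ∈ Finset.range (N + 1), o k p.1 * p.2 ^ (2 * k)

lemma oddVF_eq_phiVF (N : ℕ) (o : ℕ → ℝ → ℝ) : oddVF N o = phiVF (oddDamping N o) := rfl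

section OddSystem

variable {N j : ℕ} {o : ℕ → ℝ → ℝ} {ε : ℝ}

lemma continuous_oddDamping (ho : ∀ k ≤ N, Continuous (o k)) : Continuous (oddDamping N o) :=
  continuous_finsetSum _ fun k hk =>
    ((ho k (Finset.mem_range_succ_iff.1 hk)).comp continuous_fst).mul (continuous_snd.pow _)

lemma add_mul_pow_le_oddDamping (hj : j ∈ Finset.Icc 1 N) {p : ℝ × ℝ}
    (hnonneg : ∀ k ∈ Finset.Icc 1 N, 0 ≤ o k p.1) :
    o 0 p.1 + o j p.1 * p.2 ^ (2 * j) ≤ oddDamping N o p := by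
  have hsplit : oddDamping N o p =
      o 0 p.1 + ∑ k ∈ Finset.Icc 1 N, o k p.1 * p.2 ^ (2 * k) := by
    rw [oddDamping, Finset.sum_range_eq_add_Ico _ N.add_one_pos, Finset.Ico_add_one_right_eq_Icc,
      mul_zero, pow_zero, mul_one]
  rw [hsplit]
  gcongr
  exact Finset.single_le_sum (f := fun k => o k p.1 * p.2 ^ (2 * k))
    (fun k hk => mul_nonneg (hnonneg k hk) ((even_two_mul k).pow_nonneg _)) hj

lemma exists_pos_forall_add_mul_pow_pos {f g : ℝ → ℝ} (hf : Continuous f) (hg : Continuous g)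
    (hf_nonneg : ∀ x, ε < |x| → 0 ≤ f x) (hg_pos : ∀ x, 0 < g x) (hj : j ≠ 0) :
    ∃ c > 0, ∀ p, c ≤ energy p → p.2 ≠ 0 → 0 < f p.1 + g p.1 * p.2 ^ (2 * j) := by
  obtain ⟨C, hC, hdom⟩ : ∃ C > 0, ∀ x ∈ Icc (-ε) ε, -f x < C * g x :=
    exists_pos_forall_lt_mul_of_isCompact isCompact_Icc hg.continuousOn hf.neg.continuousOn
      (fun x _ => (hg_pos x).le) fun x _ hzero => absurd hzero (hg_pos x).ne'
  refine ⟨ε ^ 2 + (1 + C), by positivity, fun p hp hy => ?_⟩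
  rcases lt_or_ge ε |p.1| with houter | hinner
  · exact add_pos_of_nonneg_of_pos (hf_nonneg _ houter)
      (mul_pos (hg_pos _) ((even_two_mul j).pow_pos hy))
  · have hx : p.1 ∈ Icc (-ε) ε := abs_le.1 hinner
    have hxsq : p.1 ^ 2 ≤ ε ^ 2 := sq_le_sq' hx.1 hx.2
    have hysq : 1 + C ≤ p.2 ^ 2 := by
      unfold energy at hp
      linarith
    have hpow : C ≤ p.2 ^ (2 * j) :=
      calc C ≤ p.2 ^ 2 := by linarith
        _ ≤ (p.2 ^ 2) ^ j := le_self_pow₀ (by linarith) hj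
        _ = p.2 ^ (2 * j) := (pow_mul _ _ _).symm
    have := mul_le_mul_of_nonneg_left hpow (hg_pos p.1).le
    linarith [hdom p.1 hx]

end OddSystem

theorem statement7_general (N : ℕ) (o : ℕ → ℝ → ℝ) (ho_zero : Continuous (o 0))
    (ho : ∀ k ∈ Finset.Icc 1 N, Differentiable ℝ (o k))
    (hmono : ∀ k ∈ Finset.Icc 1 N, ∀ x : ℝ, x * deriv (o k) x + 2 * (k : ℝ) * o k x ≥ 0)
    (ε : ℝ) (hf1 : ∀ x : ℝ, ε < |x| → o 0 x ≥ 0)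
    (hkbar : ∃ kbar ∈ Finset.Icc 1 N, 0 < o kbar 0) :
    ∃ M > (0 : ℝ), ∀ (γ : ℝ → ℝ × ℝ) (t₀ : ℝ), IsSolOn (oddVF N o) γ (Ici t₀) →
      ∃ T ≥ t₀, ∀ t ≥ T, (γ t).1 ^ 2 + (γ t).2 ^ 2 ≤ M ^ 2 := by
  obtain ⟨j, hj, hj_zero⟩ := hkbar
  have hne (k : ℕ) (hk : k ∈ Finset.Icc 1 N) : k ≠ 0 :=
    Nat.one_le_iff_ne_zero.1 (Finset.mem_Icc.1 hk).1
  have heuler (k : ℕ) (hk : k ∈ Finset.Icc 1 N) (x : ℝ) :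
      0 ≤ fderiv ℝ (o k) x x + (2 * k : ℕ) * o k x := by
    simpa [fderiv_eq_smul_deriv] using hmono k hk x
  have hnonneg (k : ℕ) (hk : k ∈ Finset.Icc 1 N) (x : ℝ) : 0 ≤ o k x :=
    nonneg_of_euler_nonneg (mul_ne_zero two_ne_zero (hne k hk)) (ho k hk) (heuler k hk) x
  have hj_pos (x : ℝ) : 0 < o j x :=
    pos_of_euler_nonneg_of_zero_pos (ho j hj) (heuler j hj) hj_zero x
  have hcont (k : ℕ) (hk : k ≤ N) : Continuous (o k) := by
    rcases k.eq_zero_or_pos with rfl | hk_pos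
    · exact ho_zero
    · exact (ho k (Finset.mem_Icc.2 ⟨hk_pos, hk⟩)).continuous
  obtain ⟨c, hc, hpos⟩ := exists_pos_forall_add_mul_pow_pos ho_zero (ho j hj).continuous hf1 hj_pos
    (hne j hj)
  refine ⟨√c, sqrt_pos.2 hc, fun γ t₀ hγ => ?_⟩
  rw [sq_sqrt hc.le]
  exact (oddVF_eq_phiVF N o ▸ hγ).exists_forall_energy_le (continuous_oddDamping hcont) hc
    fun p hp hy => (hpos p hp hy).trans_le (add_mul_pow_le_oddDamping hj fun k hk => hnonneg k hk _)

/-- for the odd system (even coefficients vanish), if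
`x f_{2k+1}'(x) + 2k f_{2k+1}(x) ≥ 0` for `k = 1,…,N`, `f₁ ≥ 0` outside
`[−ε,ε]` and some `f_{2k̄+1} > 0` on `[−ε,ε]`, then there is a disk `D_M` which
every forward-complete solution definitely enters and remains in. -/
theorem statement7 (N : ℕ) (o : ℕ → ℝ → ℝ)
    (ho : ∀ k ∈ Finset.range (N + 1), ContDiff ℝ 1 (o k))
    (hmono : ∀ k ∈ Finset.Icc 1 N, ∀ x : ℝ,
      x * deriv (o k) x + 2 * (k : ℝ) * o k x ≥ 0)
    (ε : ℝ) (hε : 0 < ε)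
    (hf1 : ∀ x : ℝ, ε < |x| → o 0 x ≥ 0)
    (hkbar : ∃ kbar ∈ Finset.Icc 1 N, ∀ x ∈ Icc (-ε) ε, 0 < o kbar x) :
    ∃ M > (0:ℝ), ∀ (γ : ℝ → ℝ × ℝ) (t₀ : ℝ), IsSolOn (oddVF N o) γ (Ici t₀) →
      ∃ T ≥ t₀, ∀ t ≥ T, (γ t).1 ^ 2 + (γ t).2 ^ 2 ≤ M ^ 2 := by
  obtain ⟨kbar, hkbar, hpos⟩ := hkbar
  exact statement7_general N o (ho 0 (Finset.mem_range.2 N.succ_pos)).continuous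
    (fun k hk => (ho k (Finset.mem_range_succ_iff.2 (Finset.mem_Icc.1 hk).2)).differentiable
      one_ne_zero)
    hmono ε hf1 ⟨kbar, hkbar, hpos 0 ⟨neg_nonpos.2 hε.le, hε.le⟩⟩
end
end
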